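/- arXiv:2105.08558 — 2 statements merged into one kernel-verified Lean document; each statement's English description precedes it below -/
import Mathlib

section
/- Let ℓ > 0 and let γ : ℝ → ℝ³ be a continuous ℓ-periodic curve. Then γ is D₂-symmetric if and only if there exists a continuous arc α : [0, ℓ/4] → ℝ³ with α(0) ∈ ℝe₃ and α(ℓ/4) ∈ ℝe₁ such that γ coincides with the ℓ-periodic extension of the glued map built from α; in that case one may take α = γ restricted to [0, ℓ/4]. -/
/-!
The rotations together with the identity form a Klein four-group, and the parameter changes
`ψᵢ` generate the matching action on `ℝ / ℓℤ`, with fundamental domain `[0, ℓ/4]`. A symmetric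
curve is therefore the glued map of its own restriction to `[0, ℓ/4]`; since `0` is fixed by `ψ₃`
modulo `ℓ` and `ℓ/4` is fixed by `ψ₁`, the end points of that arc lie on the axes fixed by `R₃`
and `R₁`.

Conversely, the end point conditions make the four defining formulas of the glued map valid on
the *closed* quarter intervals (`glue_quarters`). Each `ψᵢ` permutes these closed quarters modulo
`ℓ`, so the symmetry follows from the multiplication table of the rotations. It is enough to
treat `R₁` and `R₃`, because `R₂ = R₁ R₃`.
-/

noncomputable section

open Real Set

/-- Euclidean three-space. -/
abbrev E3 : Type := EuclideanSpace ℝ (Fin 3)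

/-- The vector (a,b,c) ∈ ℝ³ (with the Euclidean norm). -/
def vec3 (a b c : ℝ) : E3 := (WithLp.equiv 2 (Fin 3 → ℝ)).symm ![a, b, c]

/-- The standard basis vectors. -/
def e1 : E3 := vec3 1 0 0
def e2 : E3 := vec3 0 1 0
def e3 : E3 := vec3 0 0 1

/-- The rotations `R₁, R₂, R₃` by angle π about the coordinate axes `ℝe₁, ℝe₂, ℝe₃`
(indexed by `0, 1, 2 : Fin 3`). -/
def Rot : Fin 3 → E3 → E3 :=
  ![fun x => vec3 (x 0) (-x 1) (-x 2),
    fun x => vec3 (-x 0) (x 1) (-x 2),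
    fun x => vec3 (-x 0) (-x 1) (x 2)]

/-- The dihedral parameter transformations `ψ₁^ℓ(t) = ℓ/2 - t`, `ψ₂^ℓ(t) = t - ℓ/2`,
`ψ₃^ℓ(t) = ℓ - t` (indexed by `0, 1, 2 : Fin 3`). -/
def psi (ℓ : ℝ) : Fin 3 → ℝ → ℝ :=
  ![fun t => ℓ / 2 - t, fun t => t - ℓ / 2, fun t => ℓ - t]

/-- An `ℓ`-periodic curve `γ : ℝ → ℝ³` is D₂-symmetric if `Rᵢ(γ(ψᵢ^ℓ(t))) = γ(t)`
for all `t ∈ ℝ` and `i = 1,2,3`. -/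
def DihedralSymmetric (ℓ : ℝ) (γ : ℝ → E3) : Prop :=
  ∀ i : Fin 3, ∀ t : ℝ, Rot i (γ (psi ℓ i t)) = γ t

/-- The `ℓ`-periodic extension of the glued map built from a generating arc `α`:
`g(t) = α(t)` on `[0, ℓ/4)`, `g(t) = Rᵢ(α(ψᵢ^ℓ(t)))` on `[iℓ/4, (i+1)ℓ/4)` for `i = 1,2,3`,
extended `ℓ`-periodically. -/
def glue (ℓ : ℝ) (α : ℝ → E3) (t : ℝ) : E3 :=
  let s := t - ℓ * (⌊t / ℓ⌋ : ℝ)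
  if s < ℓ / 4 then α s
  else if s < ℓ / 2 then Rot 0 (α (psi ℓ 0 s))
  else if s < 3 * ℓ / 4 then Rot 1 (α (psi ℓ 1 s))
  else Rot 2 (α (psi ℓ 2 s))

lemma Rot_zero_zero (x : E3) : Rot 0 (Rot 0 x) = x := by
  ext i; fin_cases i <;> simp [Rot, vec3]

lemma Rot_two_two (x : E3) : Rot 2 (Rot 2 x) = x := by
  ext i; fin_cases i <;> simp [Rot, vec3]

lemma Rot_zero_two (x : E3) : Rot 0 (Rot 2 x) = Rot 1 x := by
  ext i; fin_cases i <;> simp [Rot, vec3]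

lemma Rot_zero_one (x : E3) : Rot 0 (Rot 1 x) = Rot 2 x := by
  ext i; fin_cases i <;> simp [Rot, vec3]

lemma Rot_two_zero (x : E3) : Rot 2 (Rot 0 x) = Rot 1 x := by
  ext i; fin_cases i <;> simp [Rot, vec3]

lemma Rot_two_one (x : E3) : Rot 2 (Rot 1 x) = Rot 0 x := by
  ext i; fin_cases i <;> simp [Rot, vec3]

lemma Rot_zero_smul_e1 (c : ℝ) : Rot 0 (c • e1) = c • e1 := by
  ext i; fin_cases i <;> simp [Rot, vec3, e1]

lemma Rot_two_smul_e3 (c : ℝ) : Rot 2 (c • e3) = c • e3 := by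
  ext i; fin_cases i <;> simp [Rot, vec3, e3]

lemma exists_smul_e1_of_Rot_zero {x : E3} (h : Rot 0 x = x) : ∃ c : ℝ, x = c • e1 := by
  have h1 := congrArg (fun y : E3 => y 1) h
  have h2 := congrArg (fun y : E3 => y 2) h
  simp [Rot, vec3] at h1 h2
  refine ⟨x 0, ?_⟩
  ext i; fin_cases i <;> simp [vec3, e1] <;> linarith

lemma exists_smul_e3_of_Rot_two {x : E3} (h : Rot 2 x = x) : ∃ c : ℝ, x = c • e3 := by
  have h0 := congrArg (fun y : E3 => y 0) h
  have h1 := congrArg (fun y : E3 => y 1) h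
  simp [Rot, vec3] at h0 h1
  refine ⟨x 2, ?_⟩
  ext i; fin_cases i <;> simp [vec3, e3] <;> linarith

lemma psi_zero (ℓ t : ℝ) : psi ℓ 0 t = ℓ / 2 - t := rfl

lemma psi_one (ℓ t : ℝ) : psi ℓ 1 t = t - ℓ / 2 := rfl

lemma psi_two (ℓ t : ℝ) : psi ℓ 2 t = ℓ - t := rfl

/-- The representative of `t` modulo `ℓ` used in `glue` lies in `[0, ℓ)`. -/
lemma reduce_mem (ℓ : ℝ) (hℓ : 0 < ℓ) (t : ℝ) :
    0 ≤ t - ℓ * (⌊t / ℓ⌋ : ℝ) ∧ t - ℓ * (⌊t / ℓ⌋ : ℝ) < ℓ := by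
  have h1 : (⌊t / ℓ⌋ : ℝ) * ℓ ≤ t := (le_div_iff₀ hℓ).1 (Int.floor_le (t / ℓ))
  have h2 : t < ((⌊t / ℓ⌋ : ℝ) + 1) * ℓ := (div_lt_iff₀ hℓ).1 (Int.lt_floor_add_one (t / ℓ))
  constructor <;> linarith

lemma glue_of_mem (ℓ : ℝ) (α : ℝ → E3) (s : ℝ) (h0 : 0 ≤ s) (h1 : s < ℓ) :
    glue ℓ α s =
      if s < ℓ / 4 then α s
      else if s < ℓ / 2 then Rot 0 (α (ℓ / 2 - s))
      else if s < 3 * ℓ / 4 then Rot 1 (α (s - ℓ / 2))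
      else Rot 2 (α (ℓ - s)) := by
  have hℓ : 0 < ℓ := h0.trans_lt h1
  have hf : ⌊s / ℓ⌋ = 0 :=
    Int.floor_eq_zero_iff.2 ⟨div_nonneg h0 hℓ.le, (div_lt_one hℓ).2 h1⟩
  simp [glue, hf, psi_zero, psi_one, psi_two]

/-- Under the end point conditions, the formulas defining the glued map extend from the half-open
quarters of the period to the closed ones. -/
lemma glue_quarters (ℓ : ℝ) (hℓ : 0 < ℓ) (γ α : ℝ → E3) (hper : ∀ t, γ (t + ℓ) = γ t)
    (h3 : Rot 2 (α 0) = α 0) (h1 : Rot 0 (α (ℓ / 4)) = α (ℓ / 4))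
    (hg : ∀ t, γ t = glue ℓ α t) :
    (∀ s, 0 ≤ s → s ≤ ℓ / 4 → γ s = α s) ∧
    (∀ s, ℓ / 4 ≤ s → s ≤ ℓ / 2 → γ s = Rot 0 (α (ℓ / 2 - s))) ∧
    (∀ s, ℓ / 2 ≤ s → s ≤ 3 * ℓ / 4 → γ s = Rot 1 (α (s - ℓ / 2))) ∧
    (∀ s, 3 * ℓ / 4 ≤ s → s ≤ ℓ → γ s = Rot 2 (α (ℓ - s))) := by
  refine ⟨fun s ha hb => ?_, fun s ha hb => ?_, fun s ha hb => ?_, fun s ha hb => ?_⟩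
  · rcases hb.lt_or_eq with hb | rfl
    · rw [hg, glue_of_mem ℓ α s ha (by linarith), if_pos hb]
    · rw [hg, glue_of_mem ℓ α _ ha (by linarith), if_neg (lt_irrefl _), if_pos (by linarith),
        show ℓ / 2 - ℓ / 4 = ℓ / 4 by ring, h1]
  · rcases hb.lt_or_eq with hb | rfl
    · rw [hg, glue_of_mem ℓ α s (by linarith) (by linarith), if_neg (by linarith), if_pos hb]
    · rw [hg, glue_of_mem ℓ α _ (by linarith) (by linarith), if_neg (by linarith),
        if_neg (lt_irrefl _), if_pos (by linarith), sub_self, ← Rot_zero_two, h3]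
  · rcases hb.lt_or_eq with hb | rfl
    · rw [hg, glue_of_mem ℓ α s (by linarith) (by linarith), if_neg (by linarith),
        if_neg (by linarith), if_pos hb]
    · rw [hg, glue_of_mem ℓ α _ (by linarith) (by linarith), if_neg (by linarith),
        if_neg (by linarith), if_neg (lt_irrefl _), show ℓ - 3 * ℓ / 4 = ℓ / 4 by ring,
        show 3 * ℓ / 4 - ℓ / 2 = ℓ / 4 by ring, ← Rot_two_zero, h1]
  · rcases hb.lt_or_eq with hb | rfl
    · rw [hg, glue_of_mem ℓ α s (by linarith) hb, if_neg (by linarith),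
        if_neg (by linarith), if_neg (by linarith)]
    · have h := hper 0
      rw [zero_add] at h
      rw [h, hg, glue_of_mem s α 0 le_rfl hℓ, if_pos (by linarith), sub_self, h3]

lemma dihedralSymmetric_of_glue (ℓ : ℝ) (hℓ : 0 < ℓ) (γ α : ℝ → E3)
    (hper : ∀ t, γ (t + ℓ) = γ t)
    (h3 : Rot 2 (α 0) = α 0) (h1 : Rot 0 (α (ℓ / 4)) = α (ℓ / 4))
    (hg : ∀ t, γ t = glue ℓ α t) : DihedralSymmetric ℓ γ := by
  obtain ⟨q1, q2, q3, q4⟩ := glue_quarters ℓ hℓ γ α hper h3 h1 hg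
  have hp : Function.Periodic γ ℓ := hper
  have S2 : ∀ s, 0 ≤ s → s < ℓ → Rot 2 (γ (ℓ - s)) = γ s := by
    intro s hs0 hs1
    rcases le_total s (ℓ / 4) with ha | ha
    · rw [q1 s hs0 ha, q4 (ℓ - s) (by linarith) (by linarith), Rot_two_two, sub_sub_cancel]
    rcases le_total s (ℓ / 2) with hb | hb
    · rw [q2 s ha hb, q3 (ℓ - s) (by linarith) (by linarith), Rot_two_one,
        show ℓ - s - ℓ / 2 = ℓ / 2 - s by ring]
    rcases le_total s (3 * ℓ / 4) with hd | hd
    · rw [q3 s hb hd, q2 (ℓ - s) (by linarith) (by linarith), Rot_two_zero,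
        show ℓ / 2 - (ℓ - s) = s - ℓ / 2 by ring]
    · rw [q4 s hd hs1.le, q1 (ℓ - s) (by linarith) (by linarith)]
  have S0 : ∀ s, 0 ≤ s → s < ℓ → Rot 0 (γ (ℓ / 2 - s)) = γ s := by
    intro s hs0 hs1
    rcases le_total s (ℓ / 4) with ha | ha
    · rw [q1 s hs0 ha, q2 (ℓ / 2 - s) (by linarith) (by linarith), Rot_zero_zero, sub_sub_cancel]
    rcases le_total s (ℓ / 2) with hb | hb
    · rw [q2 s ha hb, q1 (ℓ / 2 - s) (by linarith) (by linarith)]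
    -- Here `ℓ / 2 - s ≤ 0`, so the argument is moved back into `[0, ℓ]` by one period.
    rw [← hper (ℓ / 2 - s)]
    rcases le_total s (3 * ℓ / 4) with hd | hd
    · rw [q3 s hb hd, q4 (ℓ / 2 - s + ℓ) (by linarith) (by linarith), Rot_zero_two,
        show ℓ - (ℓ / 2 - s + ℓ) = s - ℓ / 2 by ring]
    · rw [q4 s hd hs1.le, q3 (ℓ / 2 - s + ℓ) (by linarith) (by linarith), Rot_zero_one,
        show ℓ / 2 - s + ℓ - ℓ / 2 = ℓ - s by ring]
  -- A reflection symmetry on one period holds everywhere, by periodicity.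
  have ext_refl : ∀ (i : Fin 3) (c : ℝ), (∀ s, 0 ≤ s → s < ℓ → Rot i (γ (c - s)) = γ s) →
      ∀ t, Rot i (γ (c - t)) = γ t := by
    intro i c h t
    obtain ⟨ha, hb⟩ := reduce_mem ℓ hℓ t
    have h' := h _ ha hb
    have hred : γ (t - ℓ * (⌊t / ℓ⌋ : ℝ)) = γ t := by
      rw [mul_comm]; exact hp.sub_int_mul_eq _
    have hrefl : γ (c - (t - ℓ * (⌊t / ℓ⌋ : ℝ))) = γ (c - t) := by
      rw [show c - (t - ℓ * (⌊t / ℓ⌋ : ℝ)) = c - t + (⌊t / ℓ⌋ : ℝ) * ℓ by ring]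
      exact hp.int_mul _ _
    rwa [hred, hrefl] at h'
  have T0 := ext_refl 0 (ℓ / 2) S0
  have T2 := ext_refl 2 ℓ S2
  intro i t
  fin_cases i
  · exact T0 t
  · change Rot 1 (γ (t - ℓ / 2)) = γ t
    rw [← Rot_zero_two, ← hper (t - ℓ / 2), ← T0 t, ← T2 (ℓ / 2 - t),
      show ℓ - (ℓ / 2 - t) = t - ℓ / 2 + ℓ by ring]
  · exact T2 t

lemma eq_glue_of_dihedralSymmetric (ℓ : ℝ) (γ : ℝ → E3)
    (hper : ∀ t, γ (t + ℓ) = γ t) (hD : DihedralSymmetric ℓ γ) (t : ℝ) : γ t = glue ℓ γ t := by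
  have hp : Function.Periodic γ ℓ := hper
  have hred : γ (t - ℓ * (⌊t / ℓ⌋ : ℝ)) = γ t := by
    rw [mul_comm]; exact hp.sub_int_mul_eq _
  simp only [glue, hD _ _, hred, ite_self]

/-- A continuous `ℓ`-periodic curve `γ` is D₂-symmetric if and only if
there is a continuous arc `α : [0, ℓ/4] → ℝ³` with `α(0) ∈ ℝe₃` and `α(ℓ/4) ∈ ℝe₁` such
that `γ` coincides with the `ℓ`-periodic extension of the glued map built from `α`; in
that case one may take `α = γ` restricted to `[0, ℓ/4]`. -/
theorem dihedralSymmetric_iff_glued (ℓ : ℝ) (hℓ : 0 < ℓ) (γ : ℝ → E3)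
    (hc : Continuous γ) (hper : ∀ t, γ (t + ℓ) = γ t) :
    (DihedralSymmetric ℓ γ ↔
      ∃ α : ℝ → E3, ContinuousOn α (Icc 0 (ℓ / 4)) ∧
        (∃ c : ℝ, α 0 = c • e3) ∧ (∃ c : ℝ, α (ℓ / 4) = c • e1) ∧
        ∀ t, γ t = glue ℓ α t) ∧
    (DihedralSymmetric ℓ γ → ∀ t, γ t = glue ℓ γ t) := by
  have mp := eq_glue_of_dihedralSymmetric ℓ γ hper
  refine ⟨⟨fun hD => ⟨γ, hc.continuousOn, ?_, ?_, mp hD⟩, ?_⟩, mp⟩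
  · apply exists_smul_e3_of_Rot_two
    have h := hD 2 0
    have h' := hper 0
    rw [zero_add] at h'
    rwa [psi_two, sub_zero, h'] at h
  · apply exists_smul_e1_of_Rot_zero
    have h := hD 0 (ℓ / 4)
    rwa [psi_zero, show ℓ / 2 - ℓ / 4 = ℓ / 4 by ring] at h
  · rintro ⟨α, -, ⟨c, h0⟩, ⟨d, h1⟩, hg⟩
    exact dihedralSymmetric_of_glue ℓ hℓ γ α hper (by rw [h0, Rot_two_smul_e3])
      (by rw [h1, Rot_zero_smul_e1]) hg
end
end

section
/- Bending energy of the helical part of the symmetric torus-knot family: let b ≥ 3 be an odd integer and ε > 0. Define φ : [0,∞) → ℝ by φ(t) = t for t ∈ [0, (b−1)/2], φ(t) = b/2 − (1/2)(t − (b+1)/2)² for t ∈ [(b−1)/2, (b+1)/2], and φ(t) = b/2 for t ≥ (b+1)/2, and define h^ε : [0,∞) → ℝ³ by h^ε(t) = (ε²·(−1)^{(b−1)/2}·sin(π·φ(t/ε)), t, ε²·cos(π·φ(t/ε))). Then h^ε is continuously differentiable, twice differentiable outside the finite set {(b−1)ε/2, (b+1)ε/2}, its second derivative there satisfies ‖(h^ε)''(t)‖²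 = π⁴·φ'(t/ε)⁴ + π²·φ''(t/ε)², and ∫₀^{(b+1)ε/2} ‖(h^ε)''(t)‖² dt ≤ ε·π²·(π²·((b−1)/2 + 1/5) + (b+1)/2) < ε·π⁴·(b+1). -/
/-!
The curve is controlled by closed forms for `φ`, `φ'` and `φ''`. With `p = (b-1)/2` and
`q = (b+1)/2 = p + 1`, the three branches of `φ` combine into
`φ(t) = t - max(0, t-p)²/2 + max(0, t-q)²/2` (`phi_eq`). As `max(0, x)²/2` has derivative
`max(0, x)`, the derivative `φ'(t) = 1 - max(0, t-p) + max(0, t-q)` (`dphi`) is continuous,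
and away from `p, q` it is differentiable with derivative `0` or `-1`.

Differentiating `h^ε` twice, the factors of `ε` cancel against the inner derivatives, and
`sin² + cos² = 1` gives `‖h''‖² = π⁴ φ'⁴ + π² φ''²` (`norm_hel_second_sq`). Since `|φ''| ≤ 1`,
this is almost everywhere at most the continuous function `π⁴ φ'(t/ε)⁴ + π²`, whose integral over
`[0, qε]` is exactly `ε π² (π² (p + 1/5) + q)`; the last inequality follows from `π > 3`.
-/

noncomputable section

open Real Set

/-- The parameter transformation `φ` (for an odd integer `b ≥ 3`). -/
def phi (b : ℕ) (t : ℝ) : ℝ :=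
  if t ≤ ((b : ℝ) - 1) / 2 then t
  else if t ≤ ((b : ℝ) + 1) / 2 then (b : ℝ) / 2 - (1 / 2) * (t - ((b : ℝ) + 1) / 2) ^ 2
  else (b : ℝ) / 2

/-- The helical part `h^ε` of the generating arc of the D₂-symmetric `(2,b)`-torus knots
(with `ρ = ε²`). -/
def hel (b : ℕ) (ε : ℝ) (t : ℝ) : E3 :=
  vec3 (ε ^ 2 * (-1 : ℝ) ^ ((b - 1) / 2) * Real.sin (π * phi b (t / ε)))
    t
    (ε ^ 2 * Real.cos (π * phi b (t / ε)))

/-- The closed form `1 - max(0, t-p) + max(0, t-q)` of `φ'`, with `p = (b-1)/2`, `q = (b+1)/2`. -/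
def dphi (b : ℕ) (t : ℝ) : ℝ :=
  1 - max 0 (t - ((b : ℝ) - 1) / 2) + max 0 (t - ((b : ℝ) + 1) / 2)

lemma phi_eq (b : ℕ) (t : ℝ) :
    phi b t = t - (max 0 (t - ((b : ℝ) - 1) / 2)) ^ 2 / 2
      + (max 0 (t - ((b : ℝ) + 1) / 2)) ^ 2 / 2 := by
  unfold phi
  split_ifs with h1 h2
  · rw [max_eq_left (by linarith), max_eq_left (by linarith)]; ring
  · rw [max_eq_right (by linarith), max_eq_left (by linarith)]; ring
  · rw [max_eq_right (by linarith), max_eq_right (by linarith)]; ring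

lemma hasDerivAt_max_zero_of_ne {x : ℝ} (hx : x ≠ 0) :
    HasDerivAt (fun y : ℝ => max 0 y) (if 0 < x then 1 else 0) x := by
  rcases lt_or_gt_of_ne hx with h | h
  · rw [if_neg (by linarith)]
    refine (hasDerivAt_const x (0 : ℝ)).congr_of_eventuallyEq ?_
    filter_upwards [Iio_mem_nhds h] with y hy using max_eq_left (le_of_lt hy)
  · rw [if_pos h]
    refine (hasDerivAt_id x).congr_of_eventuallyEq ?_
    filter_upwards [Ioi_mem_nhds h] with y hy using max_eq_right (le_of_lt hy)

lemma hasDerivAt_max_zero_sq (x : ℝ) :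
    HasDerivAt (fun y : ℝ => (max 0 y) ^ 2 / 2) (max 0 x) x := by
  by_cases hx : x = 0
  · subst hx
    -- At the kink, `max 0 y ^ 2 / 2` is bounded by `y ^ 2`, hence has derivative zero.
    rw [max_self]
    refine HasDerivAt.of_isLittleO ?_
    have h2 : (fun y : ℝ => y ^ 2) =o[nhds 0] fun y : ℝ => y := by
      simpa using Asymptotics.isLittleO_pow_pow (𝕜 := ℝ) (m := 1) (n := 2) (by norm_num)
    have h1 : (fun y : ℝ => (max 0 y) ^ 2 / 2) =O[nhds 0] fun y : ℝ => y ^ 2 := by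
      refine Asymptotics.IsBigO.of_bound 1 (Filter.Eventually.of_forall fun y => ?_)
      rw [Real.norm_of_nonneg (by positivity), Real.norm_of_nonneg (by positivity)]
      rcases le_total 0 y with h | h
      · rw [max_eq_right h]; nlinarith [sq_nonneg y]
      · rw [max_eq_left h]; nlinarith [sq_nonneg y]
    simpa using h1.trans_isLittleO h2
  · refine (((hasDerivAt_max_zero_of_ne hx).pow 2).div_const 2).congr_deriv ?_
    split_ifs with h
    · simp
    · rw [max_eq_left (not_lt.mp h)]; simp

lemma hasDerivAt_phi (b : ℕ) (t : ℝ) : HasDerivAt (phi b) (dphi b t) t := by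
  have h : phi b = _ := funext (phi_eq b)
  rw [h]
  exact ((hasDerivAt_id t).sub
    ((hasDerivAt_max_zero_sq (t - ((b : ℝ) - 1) / 2)).comp_sub_const t _)).add
    ((hasDerivAt_max_zero_sq (t - ((b : ℝ) + 1) / 2)).comp_sub_const t _)

lemma deriv_phi (b : ℕ) : deriv (phi b) = dphi b :=
  funext fun t => (hasDerivAt_phi b t).deriv

lemma continuous_dphi (b : ℕ) : Continuous (dphi b) := by
  unfold dphi; fun_prop

lemma hasDerivAt_dphi (b : ℕ) {t : ℝ} (hp : t ≠ ((b : ℝ) - 1) / 2) (hq : t ≠ ((b : ℝ) + 1) / 2) :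
    ∃ d : ℝ, d ^ 2 ≤ 1 ∧ HasDerivAt (dphi b) d t := by
  refine ⟨_, ?_, ((hasDerivAt_const t (1 : ℝ)).sub
    ((hasDerivAt_max_zero_of_ne (sub_ne_zero.mpr hp)).comp_sub_const t _)).add
    ((hasDerivAt_max_zero_of_ne (sub_ne_zero.mpr hq)).comp_sub_const t _)⟩
  split_ifs with h1 h2 <;> norm_num

lemma hasDerivAt_vec3 {f g k : ℝ → ℝ} {f' g' k' t : ℝ} (hf : HasDerivAt f f' t)
    (hg : HasDerivAt g g' t) (hk : HasDerivAt k k' t) :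
    HasDerivAt (fun s => vec3 (f s) (g s) (k s)) (vec3 f' g' k') t := by
  have h : HasDerivAt (fun s => ![f s, g s, k s]) ![f', g', k'] t := by
    rw [hasDerivAt_pi]
    intro i
    fin_cases i
    · exact hf
    · exact hg
    · exact hk
  exact (PiLp.continuousLinearEquiv 2 ℝ (fun _ : Fin 3 => ℝ)).symm.hasFDerivAt.comp_hasDerivAt t h

lemma norm_vec3_sq (x y z : ℝ) : ‖vec3 x y z‖ ^ 2 = x ^ 2 + y ^ 2 + z ^ 2 := by
  simp [vec3, EuclideanSpace.norm_sq_eq, Fin.sum_univ_three]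

/-- The closed form of `(h^ε)'`. -/
def dhel (b : ℕ) (ε t : ℝ) : E3 :=
  vec3 (ε * (-1 : ℝ) ^ ((b - 1) / 2) * (Real.cos (π * phi b (t / ε)) * (π * dphi b (t / ε))))
    1
    (ε * (-Real.sin (π * phi b (t / ε)) * (π * dphi b (t / ε))))

lemma hasDerivAt_angle (b : ℕ) (ε t : ℝ) :
    HasDerivAt (fun s => π * phi b (s / ε)) (π * (dphi b (t / ε) / ε)) t := by
  have h := (hasDerivAt_phi b (t / ε)).comp t ((hasDerivAt_id t).div_const ε)
  refine (h.const_mul π).congr_deriv ?_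
  ring

lemma hasDerivAt_hel (b : ℕ) {ε : ℝ} (hε : 0 < ε) (t : ℝ) :
    HasDerivAt (hel b ε) (dhel b ε t) t := by
  have hA := hasDerivAt_angle b ε t
  refine (hasDerivAt_vec3 (hA.sin.const_mul (ε ^ 2 * (-1 : ℝ) ^ ((b - 1) / 2))) (hasDerivAt_id t)
    (hA.cos.const_mul (ε ^ 2))).congr_deriv ?_
  unfold dhel
  congr 1 <;> field_simp

lemma deriv_hel (b : ℕ) {ε : ℝ} (hε : 0 < ε) : deriv (hel b ε) = dhel b ε :=
  funext fun t => (hasDerivAt_hel b hε t).deriv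

lemma continuous_phi (b : ℕ) : Continuous (phi b) :=
  continuous_iff_continuousAt.mpr fun t => (hasDerivAt_phi b t).continuousAt

lemma continuous_dhel (b : ℕ) (ε : ℝ) : Continuous (dhel b ε) := by
  have h1 := continuous_phi b
  have h2 := continuous_dphi b
  refine (PiLp.continuous_toLp 2 (fun _ : Fin 3 => ℝ)).comp (continuous_pi fun i => ?_)
  fin_cases i
  · simp only [Fin.zero_eta, Matrix.cons_val_zero]; fun_prop
  · simp only [Fin.mk_one, Matrix.cons_val_one, Matrix.cons_val_zero]; fun_prop
  · simp only [Fin.reduceFinMk, Matrix.cons_val]; fun_prop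

/-- If `φ'` has derivative `d` at `t / ε`, then `(h^ε)'` is differentiable at `t`, and the squared
norm of its derivative does not see the angle `π φ(t/ε)`. -/
lemma norm_hel_second_sq (b : ℕ) {ε : ℝ} (hε : 0 < ε) {t d : ℝ}
    (hd : HasDerivAt (dphi b) d (t / ε)) :
    ∃ v : E3, HasDerivAt (dhel b ε) v t ∧ ‖v‖ ^ 2 = π ^ 4 * dphi b (t / ε) ^ 4 + π ^ 2 * d ^ 2 := by
  have hA := hasDerivAt_angle b ε t
  have hD : HasDerivAt (fun s => π * dphi b (s / ε)) (π * (d / ε)) t := by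
    have h := hd.comp t ((hasDerivAt_id t).div_const ε)
    refine (h.const_mul π).congr_deriv ?_
    ring
  refine ⟨_, hasDerivAt_vec3 ((hA.cos.mul hD).const_mul (ε * (-1 : ℝ) ^ ((b - 1) / 2)))
    (hasDerivAt_const t 1) ((hA.sin.neg.mul hD).const_mul ε), ?_⟩
  rw [norm_vec3_sq]
  have hs : ((-1 : ℝ) ^ ((b - 1) / 2)) ^ 2 = 1 := by rw [← pow_mul, mul_comm, pow_mul]; norm_num
  have hsc := Real.sin_sq_add_cos_sq (π * phi b (t / ε))
  simp only [Pi.neg_apply]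
  generalize Real.sin (π * phi b (t / ε)) = S at *
  generalize Real.cos (π * phi b (t / ε)) = C at *
  generalize (-1 : ℝ) ^ ((b - 1) / 2) = σ at *
  generalize dphi b (t / ε) = D
  have e1 : ε * σ * (-S * (π * (D / ε)) * (π * D) + C * (π * (d / ε)))
      = σ * (-S * π ^ 2 * D ^ 2 + C * π * d) := by field_simp
  have e2 : ε * (-(C * (π * (D / ε))) * (π * D) + -S * (π * (d / ε)))
      = -(C * π ^ 2 * D ^ 2 + S * π * d) := by field_simp; ring
  rw [e1, e2]
  linear_combination (-S * π ^ 2 * D ^ 2 + C * π * d) ^ 2 * hs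
    + (π ^ 4 * D ^ 4 + π ^ 2 * d ^ 2) * hsc

lemma integral_dphi_pow_four (b : ℕ) (hb : 1 ≤ b) :
    ∫ t in (0 : ℝ)..(((b : ℝ) + 1) / 2), dphi b t ^ 4 = ((b : ℝ) - 1) / 2 + 1 / 5 := by
  have hb' : (1 : ℝ) ≤ b := by exact_mod_cast hb
  have hc : Continuous fun t => dphi b t ^ 4 := (continuous_dphi b).pow 4
  rw [← intervalIntegral.integral_add_adjacent_intervals
    (hc.intervalIntegrable 0 (((b : ℝ) - 1) / 2)) (hc.intervalIntegrable _ _)]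
  have h1 : ∫ t in (0 : ℝ)..(((b : ℝ) - 1) / 2), dphi b t ^ 4
      = ∫ t in (0 : ℝ)..(((b : ℝ) - 1) / 2), (1 : ℝ) := by
    refine intervalIntegral.integral_congr fun t ht => ?_
    rw [uIcc_of_le (by linarith)] at ht
    have := ht.2
    simp only [dphi]
    rw [max_eq_left (by linarith), max_eq_left (by linarith)]; norm_num
  have h2 : ∫ t in (((b : ℝ) - 1) / 2)..(((b : ℝ) + 1) / 2), dphi b t ^ 4
      = ∫ t in (((b : ℝ) - 1) / 2)..(((b : ℝ) + 1) / 2), (((b : ℝ) + 1) / 2 - t) ^ 4 := by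
    refine intervalIntegral.integral_congr fun t ht => ?_
    rw [uIcc_of_le (by linarith)] at ht
    have := ht.2
    have := ht.1
    simp only [dphi]
    rw [max_eq_right (by linarith), max_eq_left (by linarith)]; ring
  rw [h1, h2, intervalIntegral.integral_comp_sub_left (fun x : ℝ => x ^ 4), integral_pow]
  simp only [intervalIntegral.integral_const, smul_eq_mul]
  norm_num
  ring

/-- **Bending energy of the helical part.** For odd `b ≥ 3` and `ε > 0`,
the helix `h^ε` is continuously differentiable on `[0, ∞)`, twice differentiable outside
`{(b-1)ε/2, (b+1)ε/2}` with `‖(h^ε)''(t)‖² = π⁴·φ'(t/ε)⁴ + π²·φ''(t/ε)²` there, and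
`∫₀^{(b+1)ε/2} ‖(h^ε)''‖² ≤ ε·π²·(π²·((b-1)/2 + 1/5) + (b+1)/2) < ε·π⁴·(b+1)`. -/
theorem helical_part_energy (b : ℕ) (hb : Odd b) (hb3 : 3 ≤ b) (ε : ℝ) (hε : 0 < ε) :
    ContDiffOn ℝ 1 (hel b ε) (Ici 0) ∧
    (∀ t : ℝ, 0 < t → t ≠ ((b : ℝ) - 1) * ε / 2 → t ≠ ((b : ℝ) + 1) * ε / 2 →
      DifferentiableAt ℝ (deriv (hel b ε)) t ∧
      ‖deriv (deriv (hel b ε)) t‖ ^ 2 =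
        π ^ 4 * (deriv (phi b) (t / ε)) ^ 4 + π ^ 2 * (deriv (deriv (phi b)) (t / ε)) ^ 2) ∧
    (∫ t in (0 : ℝ)..(((b : ℝ) + 1) * ε / 2), ‖deriv (deriv (hel b ε)) t‖ ^ 2) ≤
      ε * π ^ 2 * (π ^ 2 * (((b : ℝ) - 1) / 2 + 1 / 5) + ((b : ℝ) + 1) / 2) ∧
    ε * π ^ 2 * (π ^ 2 * (((b : ℝ) - 1) / 2 + 1 / 5) + ((b : ℝ) + 1) / 2) <
      ε * π ^ 4 * ((b : ℝ) + 1) := by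
  have hb' : (3 : ℝ) ≤ b := by exact_mod_cast hb3
  have hdiv : ∀ c t : ℝ, t ≠ c * ε / 2 → t / ε ≠ c / 2 := by
    intro c t h h'
    rw [div_eq_iff hε.ne'] at h'
    exact h (by rw [h']; ring)
  rw [deriv_hel b hε, deriv_phi b]
  refine ⟨?_, ?_, ?_, ?_⟩
  · refine ContDiff.contDiffOn (contDiff_one_iff_deriv.mpr ⟨fun t => ?_, ?_⟩)
    · exact (hasDerivAt_hel b hε t).differentiableAt
    · rw [deriv_hel b hε]; exact continuous_dhel b ε
  · intro t _ hp hq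
    obtain ⟨d, -, hd⟩ := hasDerivAt_dphi b (hdiv _ _ hp) (hdiv _ _ hq)
    obtain ⟨v, hv, hn⟩ := norm_hel_second_sq b hε hd
    exact ⟨hv.differentiableAt, by rw [hv.deriv, hd.deriv, hn]⟩
  · have hc : Continuous fun t => π ^ 4 * dphi b (t / ε) ^ 4 + π ^ 2 := by
      have := continuous_dphi b
      fun_prop
    have hle : (0 : ℝ) ≤ ((b : ℝ) + 1) * ε / 2 := by positivity
    calc (∫ t in (0 : ℝ)..(((b : ℝ) + 1) * ε / 2), ‖deriv (dhel b ε) t‖ ^ 2)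
        ≤ ∫ t in (0 : ℝ)..(((b : ℝ) + 1) * ε / 2), (π ^ 4 * dphi b (t / ε) ^ 4 + π ^ 2) := by
          rw [intervalIntegral.integral_of_le hle, intervalIntegral.integral_of_le hle]
          -- Only the continuous majorant needs to be integrable, the integrand being nonnegative.
          refine MeasureTheory.integral_mono_of_nonneg
            (Filter.Eventually.of_forall fun t => by positivity)
            (hc.integrableOn_Ioc) (MeasureTheory.ae_restrict_of_ae ?_)
          filter_upwards [MeasureTheory.Measure.ae_ne MeasureTheory.volume (((b : ℝ) - 1) * ε / 2),
            MeasureTheory.Measure.ae_ne MeasureTheory.volume (((b : ℝ) + 1) * ε / 2)] with t hp hq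
          obtain ⟨d, hd1, hd⟩ := hasDerivAt_dphi b (hdiv _ _ hp) (hdiv _ _ hq)
          obtain ⟨v, hv, hn⟩ := norm_hel_second_sq b hε hd
          rw [hv.deriv, hn]
          nlinarith [sq_nonneg π]
      _ = ε * π ^ 2 * (π ^ 2 * (((b : ℝ) - 1) / 2 + 1 / 5) + ((b : ℝ) + 1) / 2) := by
          have hq : ((b : ℝ) + 1) * ε / 2 / ε = ((b : ℝ) + 1) / 2 := by field_simp
          have hi : IntervalIntegrable (fun t => π ^ 4 * dphi b t ^ 4) MeasureTheory.volume 0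
              (((b : ℝ) + 1) / 2) :=
            (((continuous_dphi b).pow 4).const_mul (π ^ 4)).intervalIntegrable _ _
          rw [intervalIntegral.integral_comp_div (fun t => π ^ 4 * dphi b t ^ 4 + π ^ 2) hε.ne',
            hq, zero_div, intervalIntegral.integral_add hi intervalIntegrable_const,
            intervalIntegral.integral_const_mul, integral_dphi_pow_four b (by omega),
            intervalIntegral.integral_const]
          simp only [smul_eq_mul]
          ring
  · have hpi : (9 : ℝ) < π ^ 2 := by nlinarith [Real.pi_gt_three]
    have key : π ^ 2 * (((b : ℝ) - 1) / 2 + 1 / 5) + ((b : ℝ) + 1) / 2 < π ^ 2 * ((b : ℝ) + 1) := by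
      nlinarith
    calc _ < ε * π ^ 2 * (π ^ 2 * ((b : ℝ) + 1)) := by gcongr
      _ = _ := by ring
end
end
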